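/- Let W = W(A, α, u) be a generalized Weyl algebra with u central in A, and let m ≥ 1 be such that uA + α^j(u)A = A for 1 ≤ j < m but uA + α^m(u)A ≠ A. If I is a maximal two-sided ideal of A containing uA + α^m(u)A, then the graded ideal J(I) is a maximal two-sided ideal of W. -/

import Mathlib

/-!
Write `M_d` for the monomial of degree `d`. The components of `J(I)` have the uniform description
`a ∈ I_d ↔ α^ℓ(a) ∈ I` for every integer `ℓ` such that both `ℓ` and `ℓ + d` lie in `[0, m)`
(`mem_Jcomp_iff`). So `W / J(I)` behaves like an `m × m` matrix ring over `A / I`, where `α^ℓ`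
applied to the coefficient of `M_d` gives the entry in row `ℓ` and column `ℓ + d`. In this picture
`u ∈ I` and `α^m(u) ∈ I` are what keeps `J(I)` stable under multiplication by `X` and `Y` at the
edge of the matrix (`mul_mem_gwaJ_left`, `mul_mem_gwaJ_right`).

The hypothesis on `u` enters only through `mul_zpow_u_notMem`: for `1 ≤ j < m` the central element
`α^j(u)` is invertible modulo `I`. Hence suitable products of translates of `u` are central
elements `ε_p` which vanish on all diagonal entries but the `p`-th (`exists_separator`). If an
ideal `T` contains `J(I)` and some `w` with nonzero `(p, q)` entry, then `ε_p w ε_q` is, modulo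
`J(I)`, homogeneous of degree `q - p` with nonzero `(p, q)` entry (`exists_homogeneous`).
Multiplying on the right by powers of `X` or `Y` moves this entry to the diagonal (`to_diagonal`),
and the maps `w ↦ Y w X` and `w ↦ X w Y` move it along the diagonal (`all_diagonal`); the factors
`α^j(u)` that appear all have `1 ≤ j < m`. Therefore `T ∩ A` lies in none of the maximal ideals `α^{-p}(I)`,
`0 ≤ p < m`, while it contains their intersection, and so it contains `1`.
-/

noncomputable section

/-- The "monomial" of degree `i` in a generalized Weyl algebra: `Y^i` for `i ≥ 0`
and `X^(-i)` for `i < 0`. -/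
def gwaMon {W : Type*} [Monoid W] (X Y : W) : ℤ → W :=
  fun i => if 0 ≤ i then Y ^ i.toNat else X ^ (-i).toNat

/-- `W` is a generalized Weyl algebra `W(A, α, u)` with respect to the embedding
`ι : A →+* W` and the elements `X, Y`: the defining relations hold and `W` is free as
a left `A`-module with basis `{X^i : i ≥ 1} ∪ {1} ∪ {Y^i : i ≥ 1}`. -/
structure IsGWA {A W : Type*} [Ring A] [Ring W]
    (α : A ≃+* A) (u : A) (ι : A →+* W) (X Y : W) : Prop where
  central : ∀ a : A, u * a = a * u
  YX : Y * X = ι (α u)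
  XY : X * Y = ι u
  Ya : ∀ a : A, Y * ι a = ι (α a) * Y
  Xa : ∀ a : A, X * ι a = ι (α.symm a) * X
  free : Function.Bijective
    (fun f : ℤ →₀ A => f.sum fun i a => ι a * gwaMon X Y i)

/-- `R` is the conformal ambiskew polynomial ring `R(A, α, u − α(u), 1)` with respect to
the embedding `ι : A →ₐ[K] R` and the elements `x, y`: the defining relations hold and
`R` is free as a left `A`-module with basis `{yⁱxʲ : i, j ≥ 0}`. -/
structure IsAmbiskew {K A R : Type*} [Field K] [Ring A] [Algebra K A] [Ring R] [Algebra K R]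
    (α : A ≃ₐ[K] A) (u : A) (ι : A →ₐ[K] R) (x y : R) : Prop where
  ucentral : ∀ a : A, u * a = a * u
  ya : ∀ a : A, y * ι a = ι (α a) * y
  xa : ∀ a : A, x * ι a = ι (α.symm a) * x
  xy : x * y = y * x + ι (u - α u)
  free : Function.Bijective
    (fun f : ℕ × ℕ →₀ A => f.sum fun p a => ι a * (y ^ p.1 * x ^ p.2))

/-- `S` is the skew Laurent polynomial ring `A[y^{±1}; α]` with respect to the embedding
`ι : A →ₐ[K] S` and the invertible element `Y`: `Y·a = α(a)·Y` and `S` is free as a left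
`A`-module with basis `{Yⁱ : i ∈ ℤ}`. -/
structure IsSkewLaurent {K A S : Type*} [Field K] [Ring A] [Algebra K A] [Ring S] [Algebra K S]
    (α : A ≃ₐ[K] A) (ι : A →ₐ[K] S) (Y : Sˣ) : Prop where
  comm : ∀ a : A, (Y : S) * ι a = ι (α a) * (Y : S)
  free : Function.Bijective
    (fun f : ℤ →₀ A => f.sum fun i a => ι a * ((Y ^ i : Sˣ) : S))

/-- `φ : R →+* C` exhibits `C` as the localization of `R` at the multiplicative set `Z`
of central elements: each element of `Z` is central and becomes a unit, every element of
`C` is a fraction, and the kernel of `φ` is the set of elements annihilated by `Z`. -/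
structure IsCentralLocalization {R C : Type*} [Ring R] [Ring C] (Z : Set R) (φ : R →+* C) : Prop where
  central : ∀ s ∈ Z, ∀ r : R, s * r = r * s
  isUnit : ∀ s ∈ Z, IsUnit (φ s)
  surj : ∀ c : C, ∃ r : R, ∃ s ∈ Z, c * φ s = φ r
  ker : ∀ r : R, φ r = 0 ↔ ∃ s ∈ Z, r * s = 0

/-- A two-sided ideal `P` is prime: it is proper and whenever the product of two two-sided
ideals lies in `P`, one of them lies in `P`. -/
def IsPrimeTwoSided {C : Type*} [Ring C] (P : TwoSidedIdeal C) : Prop :=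
  P ≠ ⊤ ∧ ∀ I J : TwoSidedIdeal C, (∀ a ∈ I, ∀ b ∈ J, a * b ∈ P) → I ≤ P ∨ J ≤ P

/-- A two-sided ideal `M` is maximal: proper and maximal among proper two-sided ideals. -/
def IsMaximalTwoSided {C : Type*} [Ring C] (M : TwoSidedIdeal C) : Prop :=
  M ≠ ⊤ ∧ ∀ T : TwoSidedIdeal C, M < T → T = ⊤

/-- Evaluation of a (commutative) multivariate polynomial over `K` at a family of
(pairwise commuting, central) elements of a possibly noncommutative `K`-algebra. -/
def mvEval {K A : Type*} [CommSemiring K] [Ring A] [Algebra K A] {n : ℕ}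
    (v : Fin n → A) (p : MvPolynomial (Fin n) K) : A :=
  p.support.sum fun d => algebraMap K A (MvPolynomial.coeff d p) *
    ((List.finRange n).map fun i => v i ^ d i).prod

/-- The components of the graded ideal `J(I)` of a generalized Weyl algebra:
`I_i = I_{-i} = A` for `i ≥ m`, `I_i = ∩_{ℓ=0}^{m−1−i} α^{−ℓ}(I)` for `0 ≤ i ≤ m−1`, and
`I_{−i} = ∩_{ℓ=i}^{m−1} α^{−ℓ}(I)` for `0 ≤ i ≤ m−1`. -/
def Jcomp {A : Type*} [Ring A] (α : A ≃+* A) (I : Set A) (m : ℕ) : ℤ → Set A :=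
  fun d => if m ≤ d.natAbs then Set.univ
    else if 0 ≤ d then ⋂ ℓ ∈ Finset.range (m - d.natAbs), (⇑α.symm)^[ℓ] '' I
    else ⋂ ℓ ∈ Finset.Icc d.natAbs (m - 1), (⇑α.symm)^[ℓ] '' I

/-- The subset of a generalized Weyl algebra consisting of all elements whose (unique)
graded components of each degree `d` have coefficients in the prescribed set `comp d`. -/
def gwaGradedSet {A W : Type*} [Ring A] [Ring W] (ι : A →+* W) (X Y : W)
    (comp : ℤ → Set A) : Set W :=
  {w | ∃ f : ℤ →₀ A, (∀ d, f d ∈ comp d) ∧ w = f.sum fun d a => ι a * gwaMon X Y d}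

/-- The set `Au + Aα^m(u)` in `A`. -/
def genSet2 {A : Type*} [Ring A] (x y : A) : Set A :=
  {a : A | ∃ b c : A, a = b * x + c * y}

/-- The product of two sets in a ring, closed under finite sums: for two-sided ideals
this is the usual ideal product. -/
def setMulSum {A : Type*} [Ring A] (S T : Set A) : Set A :=
  {x | ∃ (n : ℕ) (f g : Fin n → A), (∀ i, f i ∈ S ∧ g i ∈ T) ∧ x = ∑ i, f i * g i}

/-- The (right-nested) product of a list of sets in a ring; the empty product is `A`. -/
def listProdSet {A : Type*} [Ring A] (l : List (Set A)) : Set A :=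
  l.foldr setMulSum Set.univ

/-- The element `d_i = α(u)·α²(u)⋯αⁱ(u)`. -/
def dElt {A : Type*} [Ring A] (α : A ≃+* A) (u : A) (i : ℕ) : A :=
  ((List.range i).map fun s => (⇑α)^[s + 1] u).prod

/-- The element `e_i = α^{−i}(d_i) = u·α^{−1}(u)⋯α^{1−i}(u)`. -/
def eElt {A : Type*} [Ring A] (α : A ≃+* A) (u : A) (i : ℕ) : A :=
  (⇑α.symm)^[i] (dElt α u i)

/-- Product of two two-sided ideals. -/
def tsiMul {R : Type*} [Ring R] (I J : TwoSidedIdeal R) : TwoSidedIdeal R :=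
  TwoSidedIdeal.span {x | ∃ a ∈ I, ∃ b ∈ J, x = a * b}

/-- The (right-nested) product of a list of two-sided ideals; the empty product is `R`. -/
def tsiListProd {R : Type*} [Ring R] (l : List (TwoSidedIdeal R)) : TwoSidedIdeal R :=
  l.foldr tsiMul ⊤

/-- A subset of a ring is a right ideal. -/
def IsRightIdealSet {Q : Type*} [Ring Q] (S : Set Q) : Prop :=
  (0 : Q) ∈ S ∧ (∀ a ∈ S, ∀ b ∈ S, a + b ∈ S) ∧ (∀ a ∈ S, -a ∈ S) ∧
    (∀ a ∈ S, ∀ q : Q, a * q ∈ S)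

/-- A right ideal is uniform: it is nonzero and any two nonzero elements generate right
ideals with nonzero intersection (equivalently, any two nonzero submodules intersect
nontrivially). -/
def IsUniformRightIdealSet {Q : Type*} [Ring Q] (S : Set Q) : Prop :=
  (∃ a ∈ S, a ≠ 0) ∧ ∀ a ∈ S, a ≠ 0 → ∀ b ∈ S, b ≠ 0 →
    ∃ q₁ q₂ : Q, a * q₁ = b * q₂ ∧ a * q₁ ≠ 0

namespace GWA

/-! ### Integer powers of the automorphism -/

section Aut

variable {A : Type*} [Ring A] (α : A ≃+* A)

/-- The integer power `α^n`, taken in the group `RingAut A`. -/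
def zp (n : ℤ) : A ≃+* A := ((α : RingAut A) ^ n : RingAut A)

lemma zp_zero (a : A) : zp α 0 a = a := by simp [zp]

lemma zp_one (a : A) : zp α 1 a = α a := by simp [zp]

lemma zp_zp (i j : ℤ) (a : A) : zp α i (zp α j a) = zp α (i + j) a := by
  simp only [zp, zpow_add]; rfl

lemma zp_neg_one (a : A) : zp α (-1) a = α.symm a := by
  apply α.injective
  rw [← zp_one α (zp α (-1) a), zp_zp]
  simp [zp_zero]

lemma zp_nat (n : ℕ) (a : A) : (⇑α)^[n] a = zp α n a := by
  induction n with
  | zero => simp [zp_zero]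
  | succ n ih =>
    rw [Function.iterate_succ_apply', ih, ← zp_one α (zp α n a), zp_zp, Nat.cast_succ, add_comm]

lemma zp_symm_nat (n : ℕ) (a : A) : (⇑α.symm)^[n] a = zp α (-n) a := by
  induction n with
  | zero => simp [zp_zero]
  | succ n ih =>
    rw [Function.iterate_succ_apply', ih, ← zp_neg_one α (zp α (-n) a), zp_zp, Nat.cast_succ,
      neg_add, add_comm]

lemma mem_image_iff (S : Set A) (n : ℕ) (a : A) :
    a ∈ (⇑α.symm)^[n] '' S ↔ zp α n a ∈ S := by
  constructor
  · rintro ⟨b, hb, rfl⟩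
    rw [zp_symm_nat, zp_zp]
    simpa [zp_zero] using hb
  · intro h
    refine ⟨_, h, ?_⟩
    rw [zp_symm_nat, zp_zp]
    simp [zp_zero]

/-- The index `ℓ` is a row and `ℓ + d` a column of an `m × m` matrix: this merges the two ranges
that define `I_i` and `I_{-i}`. -/
lemma mem_Jcomp_iff (S : Set A) (m : ℕ) (d : ℤ) (a : A) :
    a ∈ Jcomp α S m d ↔
      ∀ ℓ : ℤ, 0 ≤ ℓ → ℓ < m → 0 ≤ ℓ + d → ℓ + d < m → zp α ℓ a ∈ S := by
  unfold Jcomp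
  split_ifs with h1 h2
  · simp only [Set.mem_univ, true_iff]
    intro ℓ _ _ _ _
    omega
  · simp only [Set.mem_iInter, mem_image_iff, Finset.mem_range]
    constructor
    · intro h ℓ h0 h1 h2 h3
      lift ℓ to ℕ using h0
      exact h ℓ (by omega)
    · intro h ℓ hℓ
      exact h ℓ (by omega) (by omega) (by omega) (by omega)
  · simp only [Set.mem_iInter, mem_image_iff, Finset.mem_Icc]
    constructor
    · intro h ℓ h0 h1 h2 h3
      lift ℓ to ℕ using h0
      exact h ℓ (by omega)
    · intro h ℓ hℓ
      exact h ℓ (by omega) (by omega) (by omega) (by omega)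

lemma zp_u_central {u : A} (hu : ∀ a, u * a = a * u) (n : ℤ) (a : A) :
    zp α n u * a = a * zp α n u := by
  obtain ⟨b, rfl⟩ := (zp α n).surjective a
  rw [← map_mul, hu, map_mul]

end Aut

/-! ### Multiplication of monomials -/

section Mon

variable {A W : Type*} [Ring A] [Ring W] {α : A ≃+* A} {u : A} {ι : A →+* W} {X Y : W}

lemma mon_nat (n : ℕ) : gwaMon X Y (n : ℤ) = Y ^ n := by
  simp [gwaMon]

lemma mon_neg (n : ℕ) : gwaMon X Y (-(n : ℤ)) = X ^ n := by
  rcases n with _ | n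
  · simp [gwaMon]
  · unfold gwaMon
    rw [if_neg (by omega)]
    simp

lemma mon_zero : gwaMon X Y 0 = 1 := by simp [gwaMon]

lemma Y_mul (hW : IsGWA α u ι X Y) (a : A) : Y * ι a = ι (zp α 1 a) * Y := by
  rw [zp_one]; exact hW.Ya a

lemma X_mul (hW : IsGWA α u ι X Y) (a : A) : X * ι a = ι (zp α (-1) a) * X := by
  rw [zp_neg_one]; exact hW.Xa a

lemma mon_mul_coe
    (hW : IsGWA α u ι X Y) (d : ℤ) (a : A) :
    gwaMon X Y d * ι a = ι (zp α d a) * gwaMon X Y d := by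
  obtain ⟨n, rfl | rfl⟩ := d.eq_nat_or_neg
  · rw [mon_nat]
    induction n with
    | zero => simp [zp_zero]
    | succ n ih =>
      rw [pow_succ', mul_assoc, ih, ← mul_assoc, Y_mul hW, zp_zp, mul_assoc, Nat.cast_succ,
        add_comm]
  · rw [mon_neg]
    induction n with
    | zero => simp [zp_zero]
    | succ n ih =>
      rw [pow_succ', mul_assoc, ih, ← mul_assoc, X_mul hW, zp_zp, mul_assoc, Nat.cast_succ,
        neg_add, add_comm]

lemma Y_mul_mon
    (hW : IsGWA α u ι X Y) (d : ℤ) :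
    Y * gwaMon X Y d = ι (if 0 ≤ d then 1 else zp α 1 u) * gwaMon X Y (d + 1) := by
  split_ifs with h
  · lift d to ℕ using h
    rw [← Nat.cast_succ, mon_nat, mon_nat, pow_succ']
    simp
  · obtain ⟨n, rfl⟩ : ∃ n : ℕ, d = -((n + 1 : ℕ) : ℤ) := ⟨(-d).toNat - 1, by omega⟩
    rw [mon_neg, show -((n + 1 : ℕ) : ℤ) + 1 = -(n : ℤ) by push_cast; ring, mon_neg, pow_succ',
      ← mul_assoc, hW.YX, zp_one]

lemma X_mul_mon
    (hW : IsGWA α u ι X Y) (d : ℤ) :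
    X * gwaMon X Y d = ι (if d ≤ 0 then 1 else u) * gwaMon X Y (d - 1) := by
  split_ifs with h
  · obtain ⟨n, rfl⟩ : ∃ n : ℕ, d = -(n : ℤ) := ⟨(-d).toNat, by omega⟩
    rw [show -(n : ℤ) - 1 = -((n + 1 : ℕ) : ℤ) by push_cast; ring, mon_neg, mon_neg, pow_succ']
    simp
  · obtain ⟨n, rfl⟩ : ∃ n : ℕ, d = ((n + 1 : ℕ) : ℤ) := ⟨d.toNat - 1, by omega⟩
    rw [show ((n + 1 : ℕ) : ℤ) - 1 = (n : ℤ) by push_cast; ring, mon_nat, mon_nat, pow_succ',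
      ← mul_assoc, hW.XY]

lemma mon_mul_Y
    (hW : IsGWA α u ι X Y) (d : ℤ) :
    gwaMon X Y d * Y = ι (if 0 ≤ d then 1 else zp α (d + 1) u) * gwaMon X Y (d + 1) := by
  split_ifs with h
  · lift d to ℕ using h
    rw [← Nat.cast_succ, mon_nat, mon_nat, pow_succ]
    simp
  · obtain ⟨n, rfl⟩ : ∃ n : ℕ, d = -((n + 1 : ℕ) : ℤ) := ⟨(-d).toNat - 1, by omega⟩
    rw [← mon_mul_coe hW]
    rw [mon_neg, show -((n + 1 : ℕ) : ℤ) + 1 = -(n : ℤ) by push_cast; ring, mon_neg, pow_succ,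
      mul_assoc, hW.XY]

lemma mon_mul_X
    (hW : IsGWA α u ι X Y) (d : ℤ) :
    gwaMon X Y d * X = ι (if d ≤ 0 then 1 else zp α d u) * gwaMon X Y (d - 1) := by
  split_ifs with h
  · obtain ⟨n, rfl⟩ : ∃ n : ℕ, d = -(n : ℤ) := ⟨(-d).toNat, by omega⟩
    rw [show -(n : ℤ) - 1 = -((n + 1 : ℕ) : ℤ) by push_cast; ring, mon_neg, mon_neg, pow_succ]
    simp
  · obtain ⟨n, rfl⟩ : ∃ n : ℕ, d = ((n + 1 : ℕ) : ℤ) := ⟨d.toNat - 1, by omega⟩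
    rw [show zp α ((n + 1 : ℕ) : ℤ) u = zp α (((n + 1 : ℕ) : ℤ) - 1) (zp α 1 u) by
      rw [zp_zp]; congr 2; ring, ← mon_mul_coe hW]
    rw [show ((n + 1 : ℕ) : ℤ) - 1 = (n : ℤ) by push_cast; ring, mon_nat, mon_nat, pow_succ,
      mul_assoc, hW.YX, zp_one]

/-- An additive subgroup stable under left multiplication by `A`, `X` and `Y` is a left ideal. -/
lemma mul_mem_of_left
    (hW : IsGWA α u ι X Y) {J : AddSubgroup W} (hA : ∀ b, ∀ y ∈ J, ι b * y ∈ J)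
    (hX : ∀ y ∈ J, X * y ∈ J) (hY : ∀ y ∈ J, Y * y ∈ J) (w y : W) (hy : y ∈ J) : w * y ∈ J := by
  obtain ⟨f, rfl⟩ := hW.free.2 w
  simp only [Finsupp.sum, Finset.sum_mul]
  refine sum_mem fun d hd => ?_
  clear hd
  rw [mul_assoc]
  refine hA _ _ ?_
  obtain ⟨n, rfl | rfl⟩ := d.eq_nat_or_neg
  · rw [mon_nat]
    induction n with
    | zero => simpa
    | succ n ih => rw [pow_succ', mul_assoc]; exact hY _ ih
  · rw [mon_neg]
    induction n with
    | zero => simpa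
    | succ n ih => rw [pow_succ', mul_assoc]; exact hX _ ih

/-- An additive subgroup stable under right multiplication by `A`, `X` and `Y` is a right ideal. -/
lemma mul_mem_of_right
    (hW : IsGWA α u ι X Y) {J : AddSubgroup W} (hA : ∀ b, ∀ y ∈ J, y * ι b ∈ J)
    (hX : ∀ y ∈ J, y * X ∈ J) (hY : ∀ y ∈ J, y * Y ∈ J) (w y : W) (hy : y ∈ J) : y * w ∈ J := by
  obtain ⟨f, rfl⟩ := hW.free.2 w
  simp only [Finsupp.sum, Finset.mul_sum]
  refine sum_mem fun d hd => ?_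
  clear hd
  rw [← mul_assoc]
  have h1 := hA (f d) y hy
  generalize y * ι (f d) = z at h1
  obtain ⟨n, rfl | rfl⟩ := d.eq_nat_or_neg
  · rw [mon_nat]
    induction n with
    | zero => simpa
    | succ n ih => rw [pow_succ, ← mul_assoc]; exact hY _ ih
  · rw [mon_neg]
    induction n with
    | zero => simpa
    | succ n ih => rw [pow_succ, ← mul_assoc]; exact hX _ ih

end Mon

/-! ### The graded ideal -/

section Graded

variable {A W : Type*} [Ring A] [Ring W]

/-- The set `J(I)` as an additive subgroup of `W`; stability under multiplication needs more
hypotheses and is proved separately. -/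
def gwaJ (α : A ≃+* A) (ι : A →+* W) (X Y : W) (I : TwoSidedIdeal A) (m : ℕ) : AddSubgroup W where
  carrier := gwaGradedSet ι X Y (Jcomp α (I : Set A) m)
  zero_mem' := ⟨0, fun d => by
    rw [mem_Jcomp_iff]; intros; simp [I.zero_mem], by simp⟩
  add_mem' := by
    rintro _ _ ⟨f, hf, rfl⟩ ⟨g, hg, rfl⟩
    refine ⟨f + g, fun d => ?_, ?_⟩
    · have h1 := hf d
      have h2 := hg d
      rw [mem_Jcomp_iff] at h1 h2 ⊢
      intro ℓ a b c e
      rw [Finsupp.add_apply, map_add]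
      exact I.add_mem (h1 ℓ a b c e) (h2 ℓ a b c e)
    · rw [Finsupp.sum_add_index'] <;> simp [add_mul]
  neg_mem' := by
    rintro _ ⟨f, hf, rfl⟩
    refine ⟨-f, fun d => ?_, ?_⟩
    · have h1 := hf d
      rw [mem_Jcomp_iff] at h1 ⊢
      intro ℓ a b c e
      rw [Finsupp.neg_apply, map_neg]
      exact I.neg_mem (h1 ℓ a b c e)
    · rw [Finsupp.sum_neg_index] <;> simp [Finsupp.sum]

variable {α : A ≃+* A} {u : A} {ι : A →+* W} {X Y : W} {I : TwoSidedIdeal A} {m : ℕ}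

lemma term_mem_gwaJ {d : ℤ} {a : A}
    (h : ∀ ℓ : ℤ, 0 ≤ ℓ → ℓ < m → 0 ≤ ℓ + d → ℓ + d < m → zp α ℓ a ∈ I) :
    ι a * gwaMon X Y d ∈ gwaJ α ι X Y I m := by
  refine ⟨Finsupp.single d a, fun e => ?_, by simp [Finsupp.sum_single_index]⟩
  rw [mem_Jcomp_iff]
  intro ℓ h1 h2 h3 h4
  rcases eq_or_ne d e with rfl | hde
  · simpa using h ℓ h1 h2 h3 h4
  · simp [hde, I.zero_mem]

/-- An additive map preserves `J(I)` as soon as it maps the homogeneous elements of `J(I)` into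
`J(I)`. -/
lemma map_mem_gwaJ (φ : W →+ W)
    (h : ∀ (d : ℤ) (a : A),
      (∀ ℓ : ℤ, 0 ≤ ℓ → ℓ < m → 0 ≤ ℓ + d → ℓ + d < m → zp α ℓ a ∈ I) →
      φ (ι a * gwaMon X Y d) ∈ gwaJ α ι X Y I m)
    (w : W) (hw : w ∈ gwaJ α ι X Y I m) : φ w ∈ gwaJ α ι X Y I m := by
  obtain ⟨f, hf, rfl⟩ := hw
  rw [Finsupp.sum, map_sum]
  exact sum_mem fun d _ => h d _ ((mem_Jcomp_iff α _ m d _).1 (hf d))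

lemma mul_mem_gwaJ_left
    (hW : IsGWA α u ι X Y) (huI : u ∈ I) (hαuI : zp α m u ∈ I)
    (w y : W) (hy : y ∈ gwaJ α ι X Y I m) : w * y ∈ gwaJ α ι X Y I m := by
  refine mul_mem_of_left hW (fun b => ?_) ?_ ?_ w y hy
  · refine map_mem_gwaJ (AddMonoidHom.mulLeft (ι b)) fun d a h => ?_
    rw [AddMonoidHom.coe_mulLeft, ← mul_assoc, ← map_mul]
    refine term_mem_gwaJ fun ℓ h1 h2 h3 h4 => ?_
    rw [map_mul]
    exact I.mul_mem_left _ _ (h ℓ h1 h2 h3 h4)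
  · refine map_mem_gwaJ (AddMonoidHom.mulLeft X) fun d a h => ?_
    rw [AddMonoidHom.coe_mulLeft, ← mul_assoc, X_mul hW, mul_assoc, X_mul_mon hW, ← mul_assoc,
      ← map_mul]
    refine term_mem_gwaJ fun ℓ h1 h2 h3 h4 => ?_
    rw [map_mul, zp_zp]
    by_cases hℓ : 0 < ℓ
    · exact I.mul_mem_right _ _ (h _ (by omega) (by omega) (by omega) (by omega))
    · -- A new first row: `ℓ = 0` forces `d ≥ 1`, and the factor `u` is in `I`.
      obtain rfl : ℓ = 0 := by omega
      rw [if_neg (by omega), zp_zero α u]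
      exact I.mul_mem_left _ _ huI
  · refine map_mem_gwaJ (AddMonoidHom.mulLeft Y) fun d a h => ?_
    rw [AddMonoidHom.coe_mulLeft, ← mul_assoc, Y_mul hW, mul_assoc, Y_mul_mon hW, ← mul_assoc,
      ← map_mul]
    refine term_mem_gwaJ fun ℓ h1 h2 h3 h4 => ?_
    rw [map_mul, zp_zp]
    by_cases hℓ : ℓ + 1 < m
    · exact I.mul_mem_right _ _ (h _ (by omega) (by omega) (by omega) (by omega))
    · -- A new last row: `ℓ = m - 1` forces `d < 0`, and the factor becomes `α^m(u)`.
      rw [if_neg (by omega), zp_zp, show ℓ + 1 = m by omega]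
      exact I.mul_mem_left _ _ hαuI

lemma mul_mem_gwaJ_right
    (hW : IsGWA α u ι X Y) (huI : u ∈ I) (hαuI : zp α m u ∈ I)
    (w y : W) (hy : y ∈ gwaJ α ι X Y I m) : y * w ∈ gwaJ α ι X Y I m := by
  refine mul_mem_of_right hW (fun b => ?_) ?_ ?_ w y hy
  · refine map_mem_gwaJ (AddMonoidHom.mulRight (ι b)) fun d a h => ?_
    rw [AddMonoidHom.mulRight_apply, mul_assoc, mon_mul_coe hW, ← mul_assoc, ← map_mul]
    refine term_mem_gwaJ fun ℓ h1 h2 h3 h4 => ?_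
    rw [map_mul]
    exact I.mul_mem_right _ _ (h ℓ h1 h2 h3 h4)
  · refine map_mem_gwaJ (AddMonoidHom.mulRight X) fun d a h => ?_
    rw [AddMonoidHom.mulRight_apply, mul_assoc, mon_mul_X hW, ← mul_assoc, ← map_mul]
    refine term_mem_gwaJ fun ℓ h1 h2 h3 h4 => ?_
    rw [map_mul]
    by_cases hℓ : ℓ + d < m
    · exact I.mul_mem_right _ _ (h _ (by omega) (by omega) (by omega) (by omega))
    · -- A new last column: `ℓ + d = m`, so the factor becomes `α^m(u)`.
      rw [if_neg (by omega), zp_zp, show ℓ + d = m by omega]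
      exact I.mul_mem_left _ _ hαuI
  · refine map_mem_gwaJ (AddMonoidHom.mulRight Y) fun d a h => ?_
    rw [AddMonoidHom.mulRight_apply, mul_assoc, mon_mul_Y hW, ← mul_assoc, ← map_mul]
    refine term_mem_gwaJ fun ℓ h1 h2 h3 h4 => ?_
    rw [map_mul]
    by_cases hℓ : 0 ≤ ℓ + d
    · exact I.mul_mem_right _ _ (h _ (by omega) (by omega) (by omega) (by omega))
    · -- A new first column: `ℓ + d = -1`, so the factor becomes `u`.
      rw [if_neg (by omega), zp_zp, show ℓ + (d + 1) = 0 by omega, zp_zero]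
      exact I.mul_mem_left _ _ huI

end Graded

/-! ### Separating central elements of the base ring -/

section Base

variable {A : Type*} [Ring A] {α : A ≃+* A} {u : A} {I : TwoSidedIdeal A} {m : ℕ}

/-- For `1 ≤ j < m` the element `α^j(u)` has a right inverse modulo `I`, because `u ∈ I`; hence
multiplying by it keeps elements outside `I`. -/
lemma mul_zpow_u_notMem
    (hlt : ∀ j : ℕ, 1 ≤ j → j < m → ∀ a : A, ∃ b c : A, a = u * b + (⇑α)^[j] u * c)
    (huI : u ∈ I) {x : A} (hx : x ∉ I) {j : ℤ} (h1 : 1 ≤ j) (h2 : j < m) :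
    x * zp α j u ∉ I := by
  lift j to ℕ using by omega
  intro h
  obtain ⟨b, c, hbc⟩ := hlt j (by omega) (by omega) 1
  rw [zp_nat] at hbc
  apply hx
  have : x = x * (u * b) + x * zp α j u * c := by
    rw [mul_assoc, ← mul_add, ← hbc, mul_one]
  rw [this]
  exact I.add_mem (I.mul_mem_left _ _ (I.mul_mem_right _ _ huI)) (I.mul_mem_right _ _ h)

/-- There is a central element lying in `α^{-k}(I)` for every `k ≠ p` in `[0, m)`, yet not a zero
divisor modulo `α^{-p}(I)`: the product of `α^{-k}(u)` for `k < p` and `α^{m-k}(u)` for `k > p`. -/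
lemma exists_separator (hu : ∀ a, u * a = a * u)
    (hlt : ∀ j : ℕ, 1 ≤ j → j < m → ∀ a : A, ∃ b c : A, a = u * b + (⇑α)^[j] u * c)
    (huI : u ∈ I) (hαuI : zp α m u ∈ I) {p : ℤ} (hp0 : 0 ≤ p) (hpm : p < m) :
    ∃ e : A, (∀ a, e * a = a * e) ∧
      (∀ k : ℤ, 0 ≤ k → k < m → k ≠ p → zp α k e ∈ I) ∧
      ∀ x ∉ I, x * zp α p e ∉ I := by
  suffices H : ∀ S : Finset ℤ, (∀ k ∈ S, 0 ≤ k ∧ k < m ∧ k ≠ p) →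
      ∃ e : A, (∀ a, e * a = a * e) ∧ (∀ k ∈ S, zp α k e ∈ I) ∧ ∀ x ∉ I, x * zp α p e ∉ I by
    obtain ⟨e, h1, h2, h3⟩ := H ((Finset.Ico (0 : ℤ) m).erase p) (by simp; tauto)
    exact ⟨e, h1, fun k a b c => h2 k (by simp; tauto), h3⟩
  intro S
  induction S using Finset.induction_on with
  | empty => exact fun _ => ⟨1, by simp, by simp, by simp⟩
  | insert k S _ ih =>
    intro hS
    obtain ⟨e, h1, h2, h3⟩ := ih fun k hk => hS k (Finset.mem_insert_of_mem hk)
    obtain ⟨hk0, hkm, hkp⟩ := hS k (Finset.mem_insert_self _ _)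
    -- `t` is the exponent of the translate of `u` which lies in `α^{-k}(I)` but is invertible
    -- modulo `α^{-p}(I)`.
    obtain ⟨t, ht, ht1, ht2⟩ : ∃ t : ℤ, zp α (k + t) u ∈ I ∧ 1 ≤ p + t ∧ p + t < m := by
      rcases lt_or_gt_of_ne hkp with h | h
      · exact ⟨-k, by simpa [zp_zero] using huI, by omega, by omega⟩
      · exact ⟨m - k, by simpa using hαuI, by omega, by omega⟩
    refine ⟨e * zp α t u, fun a => ?_, fun l hl => ?_, fun x hx => ?_⟩
    · rw [mul_assoc, zp_u_central α hu, ← mul_assoc, h1, mul_assoc]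
    · rw [map_mul, zp_zp]
      rcases Finset.mem_insert.1 hl with rfl | hl
      · exact I.mul_mem_left _ _ ht
      · exact I.mul_mem_right _ _ (h2 l hl)
    · rw [map_mul, zp_zp, ← mul_assoc]
      exact mul_zpow_u_notMem hlt huI (h3 x hx) ht1 ht2

/-- Two-sided maximality gives comaximality with any two-sided ideal `H` not contained in
`α^{-p}(I)`. -/
lemma exists_one_sub_mem (hI : IsMaximalTwoSided I) (H : TwoSidedIdeal A) (p : ℤ)
    (h : ∃ c ∈ H, zp α p c ∉ I) : ∃ e ∈ H, zp α p (1 - e) ∈ I := by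
  obtain ⟨c, hc, hcI⟩ := h
  let K : TwoSidedIdeal A := TwoSidedIdeal.comap (zp α (-p)) H
  have hK : ∀ x, x ∈ K ↔ zp α (-p) x ∈ H := fun x => TwoSidedIdeal.mem_comap _
  have hlt : I < I ⊔ K := by
    refine lt_of_le_of_ne le_sup_left fun heq => hcI ?_
    rw [heq]
    refine TwoSidedIdeal.mem_sup_right ((hK _).2 ?_)
    rw [zp_zp]
    simpa [zp_zero] using hc
  have htop := hI.2 _ hlt
  obtain ⟨y, hy, z, hz, hyz⟩ := TwoSidedIdeal.mem_sup.1 ((TwoSidedIdeal.one_mem_iff _).2 htop)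
  refine ⟨zp α (-p) z, (hK z).1 hz, ?_⟩
  rw [map_sub, map_one, zp_zp]
  simpa [zp_zero, ← hyz] using hy

/-- A two-sided ideal containing `⋂ α^{-p}(I)` but contained in none of these finitely many
maximal ideals is everything. -/
lemma one_mem_of_forall (hI : IsMaximalTwoSided I) (H : TwoSidedIdeal A)
    (hsub : ∀ a, (∀ p : ℤ, 0 ≤ p → p < m → zp α p a ∈ I) → a ∈ H)
    (h : ∀ p : ℤ, 0 ≤ p → p < m → ∃ c ∈ H, zp α p c ∉ I) : (1 : A) ∈ H := by
  have key : ∀ S : Finset ℤ, (∀ p ∈ S, 0 ≤ p ∧ p < m) →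
      ∃ e ∈ H, ∀ p ∈ S, zp α p (1 - e) ∈ I := by
    intro S
    induction S using Finset.induction_on with
    | empty => exact fun _ => ⟨0, H.zero_mem, by simp⟩
    | insert p S _ ih =>
      intro hS
      obtain ⟨e, he, heS⟩ := ih fun k hk => hS k (Finset.mem_insert_of_mem hk)
      obtain ⟨hp0, hpm⟩ := hS p (Finset.mem_insert_self _ _)
      obtain ⟨f, hf, hfI⟩ := exists_one_sub_mem hI H p (h p hp0 hpm)
      refine ⟨e + f - e * f, H.sub_mem (H.add_mem he hf) (H.mul_mem_left _ _ hf), fun k hk => ?_⟩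
      rw [show 1 - (e + f - e * f) = (1 - e) * (1 - f) by noncomm_ring, map_mul]
      rcases Finset.mem_insert.1 hk with rfl | hk
      · exact I.mul_mem_left _ _ hfI
      · exact I.mul_mem_right _ _ (heS k hk)
  obtain ⟨e, he, heI⟩ := key (Finset.Ico 0 (m : ℤ)) (by simp)
  have := H.add_mem he (hsub (1 - e) fun p h0 h1 => heI p (by simp; omega))
  simpa using this

end Base

/-! ### Ideals strictly above `J(I)` -/

section Maximal

variable {A W : Type*} [Ring A] [Ring W] {α : A ≃+* A} {u : A} {ι : A →+* W} {X Y : W}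
  {I : TwoSidedIdeal A} {m : ℕ}

/-- `HasEntry α ι X Y I T p d`: the ideal `T` contains a homogeneous element of degree `d` whose
matrix entry at row `p` and column `p + d` is nonzero modulo `I`. -/
def HasEntry (α : A ≃+* A) (ι : A →+* W) (X Y : W) (I : TwoSidedIdeal A) (T : TwoSidedIdeal W)
    (p d : ℤ) : Prop :=
  ∃ c : A, ι c * gwaMon X Y d ∈ T ∧ zp α p c ∉ I

/-- Cutting `w` with separating elements on both sides isolates a single matrix entry. -/
lemma exists_homogeneous
    (hW : IsGWA α u ι X Y)
    (hlt : ∀ j : ℕ, 1 ≤ j → j < m → ∀ a : A, ∃ b c : A, a = u * b + (⇑α)^[j] u * c)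
    (huI : u ∈ I) (T : TwoSidedIdeal W) (hαuI : zp α m u ∈ I)
    (hJT : ∀ w ∈ gwaJ α ι X Y I m, w ∈ T) {w : W} (hwT : w ∈ T) (hwJ : w ∉ gwaJ α ι X Y I m) :
    ∃ p d : ℤ, 0 ≤ p ∧ p < m ∧ 0 ≤ p + d ∧ p + d < m ∧ HasEntry α ι X Y I T p d := by
  obtain ⟨f, hf⟩ := hW.free.2 w
  have hne : ¬ ∀ d, f d ∈ Jcomp α (I : Set A) m d := fun h => hwJ ⟨f, h, hf.symm⟩
  push Not at hne
  obtain ⟨d, hd⟩ := hne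
  rw [mem_Jcomp_iff] at hd
  push Not at hd
  obtain ⟨p, h1, h2, h3, h4, hp⟩ := hd
  refine ⟨p, d, h1, h2, h3, h4, ?_⟩
  obtain ⟨e, hec, heI, hep⟩ := exists_separator hW.central hlt huI hαuI h1 h2
  obtain ⟨g, -, hgI, hgq⟩ := exists_separator hW.central hlt huI hαuI h3 h4
  have hterm : ∀ i, ι e * (ι (f i) * gwaMon X Y i) * ι g
      = ι (e * f i * zp α i g) * gwaMon X Y i := fun i => by
    rw [map_mul, map_mul, mul_assoc, mul_assoc, mon_mul_coe hW, mul_assoc, mul_assoc]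
  refine ⟨e * f d * zp α d g, ?_, ?_⟩
  · have hdf : d ∈ f.support := by
      rw [Finsupp.mem_support_iff]
      intro h0
      rw [h0, map_zero] at hp
      exact hp I.zero_mem
    have hsum : ι e * w * ι g = ι (e * f d * zp α d g) * gwaMon X Y d
        + ∑ i ∈ f.support.erase d, ι (e * f i * zp α i g) * gwaMon X Y i := by
      rw [Finset.add_sum_erase _ (fun i => ι (e * f i * zp α i g) * gwaMon X Y i) hdf, ← hf]
      simp only [Finsupp.sum, Finset.mul_sum, Finset.sum_mul, hterm]
    have hrest : ∑ i ∈ f.support.erase d, ι (e * f i * zp α i g) * gwaMon X Y i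
        ∈ gwaJ α ι X Y I m := by
      refine sum_mem fun i hi => term_mem_gwaJ fun ℓ a1 a2 a3 a4 => ?_
      have hid : i ≠ d := Finset.ne_of_mem_erase hi
      rw [map_mul, map_mul, zp_zp]
      by_cases hℓ : ℓ = p
      · exact I.mul_mem_left _ _ (hgI _ a3 a4 (by omega))
      · exact I.mul_mem_right _ _ (I.mul_mem_right _ _ (heI ℓ a1 a2 hℓ))
    rw [eq_sub_of_add_eq hsum.symm]
    exact T.sub_mem (T.mul_mem_right _ _ (T.mul_mem_left _ _ hwT)) (hJT _ hrest)
  · rw [map_mul, hec, map_mul, zp_zp]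
    exact hgq _ (hep _ hp)

/-- Right multiplication by `X` or `Y` moves an entry within its row, so it can be brought to the
diagonal; the factors `α^j(u)` picked up have `1 ≤ j < m` as the path stays in the matrix. -/
lemma to_diagonal
    (hW : IsGWA α u ι X Y)
    (hlt : ∀ j : ℕ, 1 ≤ j → j < m → ∀ a : A, ∃ b c : A, a = u * b + (⇑α)^[j] u * c)
    (huI : u ∈ I) (T : TwoSidedIdeal W) (d : ℤ) (p : ℤ) (h1 : 0 ≤ p) (h2 : p < m) (h3 : 0 ≤ p + d) (h4 : p + d < m)
    (h : HasEntry α ι X Y I T p d) : HasEntry α ι X Y I T p 0 := by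
  obtain ⟨n, rfl | rfl⟩ := d.eq_nat_or_neg
  · induction n with
    | zero => exact h
    | succ n ih =>
      obtain ⟨c, hcT, hcI⟩ := h
      refine ih (by omega) (by omega) ⟨c * zp α (n + 1 : ℕ) u, ?_, ?_⟩
      · have := T.mul_mem_right _ X hcT
        rw [mul_assoc, mon_mul_X hW, if_neg (by omega), ← mul_assoc, ← map_mul] at this
        convert this using 3
        push_cast; ring
      · rw [map_mul, zp_zp]
        exact mul_zpow_u_notMem hlt huI hcI (by omega) (by omega)
  · induction n with
    | zero => simpa using h
    | succ n ih =>
      obtain ⟨c, hcT, hcI⟩ := h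
      refine ih (by omega) (by omega) ⟨c * zp α (-(n : ℤ)) u, ?_, ?_⟩
      · have := T.mul_mem_right _ Y hcT
        rw [mul_assoc, mon_mul_Y hW, if_neg (by omega), ← mul_assoc, ← map_mul,
          show -((n + 1 : ℕ) : ℤ) + 1 = -(n : ℤ) by push_cast; ring] at this
        exact this
      · rw [map_mul, zp_zp]
        exact mul_zpow_u_notMem hlt huI hcI (by omega) (by omega)

lemma diagonal_pred
    (hW : IsGWA α u ι X Y)
    (hlt : ∀ j : ℕ, 1 ≤ j → j < m → ∀ a : A, ∃ b c : A, a = u * b + (⇑α)^[j] u * c)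
    (huI : u ∈ I) (T : TwoSidedIdeal W) {p : ℤ} (h1 : 1 ≤ p) (h2 : p < m) (h : HasEntry α ι X Y I T p 0) :
    HasEntry α ι X Y I T (p - 1) 0 := by
  obtain ⟨c, hcT, hcI⟩ := h
  rw [mon_zero, mul_one] at hcT
  refine ⟨zp α 1 c * zp α 1 u, ?_, ?_⟩
  · have := T.mul_mem_right _ X (T.mul_mem_left Y _ hcT)
    rwa [Y_mul hW, mul_assoc, hW.YX, ← zp_one, ← map_mul, ← mul_one (ι _),
      ← mon_zero (X := X) (Y := Y)] at this
  · rw [map_mul, zp_zp, zp_zp, sub_add_cancel]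
    exact mul_zpow_u_notMem hlt huI hcI h1 h2

lemma diagonal_succ
    (hW : IsGWA α u ι X Y)
    (hlt : ∀ j : ℕ, 1 ≤ j → j < m → ∀ a : A, ∃ b c : A, a = u * b + (⇑α)^[j] u * c)
    (huI : u ∈ I) (T : TwoSidedIdeal W) {p : ℤ} (h1 : 0 ≤ p) (h2 : p + 1 < m) (h : HasEntry α ι X Y I T p 0) :
    HasEntry α ι X Y I T (p + 1) 0 := by
  obtain ⟨c, hcT, hcI⟩ := h
  rw [mon_zero, mul_one] at hcT
  refine ⟨zp α (-1) c * u, ?_, ?_⟩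
  · have := T.mul_mem_right _ Y (T.mul_mem_left X _ hcT)
    rwa [X_mul hW, mul_assoc, hW.XY, ← map_mul, ← mul_one (ι _),
      ← mon_zero (X := X) (Y := Y)] at this
  · rw [map_mul, zp_zp, add_neg_cancel_right]
    exact mul_zpow_u_notMem hlt huI hcI (by omega) h2

/-- The maps `w ↦ Y w X` and `w ↦ X w Y` reach every diagonal position from any given one. -/
lemma all_diagonal
    (hW : IsGWA α u ι X Y)
    (hlt : ∀ j : ℕ, 1 ≤ j → j < m → ∀ a : A, ∃ b c : A, a = u * b + (⇑α)^[j] u * c)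
    (huI : u ∈ I) (T : TwoSidedIdeal W) {p : ℤ} (h1 : 0 ≤ p) (h2 : p < m) (h : HasEntry α ι X Y I T p 0)
    (q : ℤ) (hq0 : 0 ≤ q) (hqm : q < m) : HasEntry α ι X Y I T q 0 := by
  have down : ∀ n : ℕ, 0 ≤ p - n → HasEntry α ι X Y I T (p - n) 0 := by
    intro n
    induction n with
    | zero => intro _; simpa using h
    | succ n ih =>
      intro hn
      have := diagonal_pred hW hlt huI T (by omega) (by omega) (ih (by omega))
      rwa [sub_sub, ← Nat.cast_succ] at this
  have up : ∀ n : ℕ, p + n < m → HasEntry α ι X Y I T (p + n) 0 := by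
    intro n
    induction n with
    | zero => intro _; simpa using h
    | succ n ih =>
      intro hn
      have := diagonal_succ hW hlt huI T (by omega) (by omega) (ih (by omega))
      rwa [add_assoc, ← Nat.cast_succ] at this
  rcases le_total q p with hqp | hqp
  · have := down (p - q).toNat (by omega)
    rwa [show p - ((p - q).toNat : ℤ) = q by omega] at this
  · have := up (q - p).toNat (by omega)
    rwa [show p + ((q - p).toNat : ℤ) = q by omega] at this

end Maximal

end GWA

open GWA

/-- Lemma 3.12: with `uA + α^j(u)A = A` for `1 ≤ j < m` but `uA + α^m(u)A ≠ A`, if `I` is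
a maximal two-sided ideal of `A` containing `uA + α^m(u)A`, then the graded ideal `J(I)`
is a maximal two-sided ideal of `W`. -/
theorem stmt11 {A W : Type*} [Ring A] [Ring W]
    (α : A ≃+* A) (u : A) (ι : A →+* W) (X Y : W) (hW : IsGWA α u ι X Y)
    (m : ℕ) (hm : 1 ≤ m)
    (hlt : ∀ j : ℕ, 1 ≤ j → j < m → ∀ a : A, ∃ b c : A, a = u * b + (⇑α)^[j] u * c)
    (hne : ¬∀ a : A, ∃ b c : A, a = u * b + (⇑α)^[m] u * c)
    (I : TwoSidedIdeal A) (huI : u ∈ I) (hαuI : (⇑α)^[m] u ∈ I)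
    (hImax : IsMaximalTwoSided I) :
    ∃ T : TwoSidedIdeal W,
      (T : Set W) = gwaGradedSet ι X Y (Jcomp α (I : Set A) m) ∧
      IsMaximalTwoSided T := by
  have hαuI' : zp α m u ∈ I := by rwa [← zp_nat]
  refine ⟨TwoSidedIdeal.mk' (gwaJ α ι X Y I m) (zero_mem _) add_mem neg_mem
    (fun hy => mul_mem_gwaJ_left hW huI hαuI' _ _ hy)
    (fun hy => mul_mem_gwaJ_right hW huI hαuI' _ _ hy), ?_, ?_, ?_⟩
  · rw [TwoSidedIdeal.coe_mk']
    rfl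
  · intro htop
    have h1 := (TwoSidedIdeal.one_mem_iff _).2 htop
    rw [TwoSidedIdeal.mem_mk'] at h1
    obtain ⟨f, hf, h1⟩ := h1
    -- By uniqueness of coefficients `f` is the constant `1`, whose diagonal entry at `0` is `1`.
    obtain rfl : f = Finsupp.single 0 1 := hW.free.1 <| by
      simp only
      rw [← h1, Finsupp.sum_single_index (by simp), mon_zero, map_one, mul_one]
    have h0 := (mem_Jcomp_iff α _ m 0 _).1 (hf 0) 0 le_rfl (by omega) (by omega) (by omega)
    rw [zp_zero, Finsupp.single_eq_same] at h0
    exact hImax.1 ((TwoSidedIdeal.one_mem_iff _).1 h0)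
  · intro T hT
    have hJT : ∀ w ∈ gwaJ α ι X Y I m, w ∈ T := fun w hw =>
      hT.le ((TwoSidedIdeal.mem_mk' _ _ _ _ _ _ _).2 hw)
    obtain ⟨w, hwT, hwJ⟩ := SetLike.exists_of_lt hT
    rw [TwoSidedIdeal.mem_mk'] at hwJ
    obtain ⟨p, d, h1, h2, h3, h4, hE⟩ := exists_homogeneous hW hlt huI T hαuI' hJT hwT hwJ
    have hdiag := all_diagonal hW hlt huI T h1 h2 (to_diagonal hW hlt huI T d p h1 h2 h3 h4 hE)
    have hone : (1 : A) ∈ TwoSidedIdeal.comap ι T := by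
      refine one_mem_of_forall (α := α) (m := m) hImax _ (fun a ha => ?_) fun q hq0 hqm => ?_
      · rw [TwoSidedIdeal.mem_comap, ← mul_one (ι a), ← mon_zero (X := X) (Y := Y)]
        exact hJT _ (term_mem_gwaJ fun ℓ a1 a2 _ _ => ha ℓ a1 a2)
      · obtain ⟨c, hcT, hcI⟩ := hdiag q hq0 hqm
        rw [mon_zero, mul_one] at hcT
        exact ⟨c, (TwoSidedIdeal.mem_comap _).2 hcT, hcI⟩
    rw [TwoSidedIdeal.mem_comap, map_one] at hone
    exact (TwoSidedIdeal.one_mem_iff _).1 hone
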